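/- A formula φ ∈ ℒ^{A,K}(ℙ) is valid in the class of modal relativized Boolean algebras if and only if φ is valid in the class of awareness models: for every MRBA (RB, f^K) and every homomorphism h : ℒ(ℙ) → RB, h⁺(φ) = 1_{h⁺(φ)}, if and only if for every awareness model M, V(φ) = L(φ). -/

import Mathlib

/-!
Soundness: a model on `W` yields the algebra of events, pairs `(L, V)` of sets of worlds with
`V ⊆ L` (where the event is defined, where it holds); `φ ↦ (L(φ), V(φ))` is a homomorphism into it,
and the image of `φ` is its own relative unit exactly when `V(φ) = L(φ)` (`stmt16`, via `eventMRBA`).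

Completeness: a canonical model whose worlds are the *prime filters* of the algebra, i.e. the
meet-filters `u` such that `¬1 ∉ u` and, whenever `1_x ∈ u`, one of `x`, `¬x` is in `u`. Such a filter
is an ultrafilter on the part of the algebra of which the world has the language, and `u` sees `v` iff
`{x | f^K x ∈ u} ⊆ v`. The element `¬1` controls everything because `0_x = x ∧ ¬1`, so a filter is
free of contradictions iff it omits `¬1`. By Zorn's lemma every consistent filter extends to a prime
filter **with the same language** (`exists_prime`). Preserving the language is what allows `f^K x ∉ u`
to be witnessed by a successor omitting `x` (`box_iff`): such a successor either contains `¬x` or does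
not have `x` in its language. The truth lemma (`canon_sat`) follows, and if `h φ ≠ 1_{h φ}` a prime
filter containing `¬ h φ` refutes `φ`.
-/

structure RBA (α : Type*) where
  meet : α → α → α
  join : α → α → α
  compl : α → α
  bot : α
  top : α
  meet_assoc : ∀ x y z, meet (meet x y) z = meet x (meet y z)
  meet_comm : ∀ x y, meet x y = meet y x
  join_assoc : ∀ x y z, join (join x y) z = join x (join y z)
  join_comm : ∀ x y, join x y = join y x
  meet_distrib : ∀ x y z, meet x (join y z) = join (meet x y) (meet x z)
  join_distrib : ∀ x y z, join x (meet y z) = meet (join x y) (join x z)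
  demorgan_meet : ∀ x y, compl (meet x y) = join (compl x) (compl y)
  demorgan_join : ∀ x y, compl (join x y) = meet (compl x) (compl y)
  meet_idem : ∀ x, meet x x = x
  join_idem : ∀ x, join x x = x
  meet_top : ∀ x, meet x top = x
  compl_compl : ∀ x, compl (compl x) = x
  join_top : ∀ x, join x top = join x (compl x)
  meet_bot : ∀ x, meet x bot = bot
  rb5 : ∀ x y,
    meet (join x (compl x)) (join y (compl y)) = join x (compl x) →
    compl (meet y (join x (compl x))) = meet (compl y) (join x (compl x))

namespace RBA
variable {α : Type*}

/-- `1_X := X ∨ ¬X` -/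
def one (R : RBA α) (x : α) : α := R.join x (R.compl x)

/-- `0_X := X ∧ ¬X` -/
def zero (R : RBA α) (x : α) : α := R.meet x (R.compl x)

/-- `ge R y x` means `y ≥ x`, i.e. `x ∧ y = x`. -/
def ge (R : RBA α) (y x : α) : Prop := R.meet x y = x

end RBA

/-- A modal relativized Boolean algebra. -/
structure MRBA (α : Type*) extends RBA α where
  fK : α → α
  f1 : ∀ x, toRBA.one (fK x) = toRBA.one x
  f2 : fK toRBA.top = toRBA.top
  f3 : ∀ x y, fK (toRBA.meet x y) = toRBA.meet (fK x) (fK y)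
  fD : ∀ x, fK (toRBA.zero x) = toRBA.zero x

/-- The language `ℒ^{A,K}(ℙ)`: `φ ::= p | 1 | ¬φ | (φ∧φ) | Aφ | Kφ`. -/
inductive AKForm (P : Type*) : Type _ where
  | var : P → AKForm P
  | one : AKForm P
  | neg : AKForm P → AKForm P
  | conj : AKForm P → AKForm P → AKForm P
  | aw : AKForm P → AKForm P
  | kn : AKForm P → AKForm P

namespace AKForm
variable {P : Type*}

/-- The propositional variables occurring in a formula. -/
def vars : AKForm P → Set P
  | .var p => {p}
  | .one => ∅
  | .neg φ => φ.vars
  | .conj φ ψ => φ.vars ∪ ψ.vars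
  | .aw φ => φ.vars
  | .kn φ => φ.vars

end AKForm

/-- An awareness model: a preorder `ge` (`ge w w'` meaning `w ≥ w'`), a serial
accessibility relation `Rel`, and valuations `L`, `V` with `L p` upward closed and
`V p ⊆ L p`. -/
structure AwModel (W P : Type*) where
  ge : W → W → Prop
  ge_refl : ∀ w, ge w w
  ge_trans : ∀ a b c, ge a b → ge b c → ge a c
  Rel : W → W → Prop
  serial : ∀ w, ∃ w', Rel w w'
  L : P → Set W
  V : P → Set W
  L_up : ∀ p w w', w ∈ L p → ge w' w → w' ∈ L p
  V_sub : ∀ p, V p ⊆ L p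

variable {W P : Type*}

/-- `φ ∈ ℒ^{A,K}(ω)`: every propositional variable of `φ` is in the language at `ω`. -/
def AwModel.Defined (M : AwModel W P) (ω : W) (φ : AKForm P) : Prop :=
  ∀ p ∈ φ.vars, ω ∈ M.L p

/-- Truth at a world: `⟨M,ω⟩ ⊨ φ`. -/
def AwModel.Sat (M : AwModel W P) : AKForm P → W → Prop
  | .var p, ω => ω ∈ M.V p
  | .one, _ => True
  | .neg φ, ω => ¬ M.Sat φ ω
  | .conj φ ψ, ω => M.Sat φ ω ∧ M.Sat ψ ω
  | .aw φ, ω => ∀ ω', M.Rel ω ω' → M.Defined ω' φ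
  | .kn φ, ω => ∀ ω', M.Rel ω ω' → M.Defined ω' φ ∧ M.Sat φ ω'

/-- `V(φ)`: the worlds in which `φ` is (defined and) true. -/
def AwModel.Vset (M : AwModel W P) (φ : AKForm P) : Set W :=
  {ω | M.Defined ω φ ∧ M.Sat φ ω}

/-- `L(φ)`: the worlds in which `φ` is defined. -/
def AwModel.Lset (M : AwModel W P) (φ : AKForm P) : Set W :=
  {ω | M.Defined ω φ}

/-- The extension `h⁺` of a homomorphism `h : ℒ(ℙ) → RB` to `ℒ^{A,K}(ℙ)`, via
`h⁺(Kφ) = f^K(h⁺(φ))` and `h⁺(Aφ) = f^A(h⁺(φ)) = f^K(1_{h⁺(φ)})`. -/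
def IsAKHom {P α : Type*} (M : MRBA α) (h : AKForm P → α) : Prop :=
  h .one = M.toRBA.top ∧ (∀ φ, h (.neg φ) = M.toRBA.compl (h φ)) ∧
    (∀ φ ψ, h (.conj φ ψ) = M.toRBA.meet (h φ) (h ψ)) ∧
    (∀ φ, h (.kn φ) = M.fK (h φ)) ∧
    (∀ φ, h (.aw φ) = M.fK (M.toRBA.one (h φ)))

/-! ### Arithmetic of relativized Boolean algebras -/

namespace RBA
variable {α : Type*} (R : RBA α)

theorem one_eq (x : α) : R.one x = R.join x R.top := (R.join_top x).symm

/-- All relative zeros are governed by the single element `¬1`, which differs from `0` in general. -/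
theorem zero_eq (x : α) : R.zero x = R.meet x (R.compl R.top) := by
  have h : R.compl (R.join (R.compl x) R.top) = R.compl (R.join (R.compl x) x) := by
    rw [R.join_top, R.compl_compl]
  rw [R.demorgan_join, R.demorgan_join, R.compl_compl] at h
  exact h.symm

theorem join_compl_top (x : α) : R.join x (R.compl R.top) = x := by
  have h := R.demorgan_meet (R.compl x) R.top
  rw [R.meet_top, R.compl_compl] at h
  exact h.symm

/-- `¬1` is neutral for `∨`, so distributivity gives this instance of absorption, although
absorption fails in general. -/
theorem join_zero (x : α) : R.join x (R.zero x) = x := by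
  rw [R.zero_eq, R.join_distrib, R.join_idem, R.join_compl_top, R.meet_idem]

theorem meet_one (x : α) : R.meet x (R.one x) = x := by
  have h := R.join_zero x
  rw [zero, R.join_distrib, R.join_idem] at h
  exact h

theorem one_compl (x : α) : R.one (R.compl x) = R.one x := by
  rw [one, one, R.compl_compl, R.join_comm]

theorem one_meet (x y : α) : R.one (R.meet x y) = R.meet (R.one x) (R.one y) := by
  simp only [one_eq]
  rw [R.join_comm, R.join_distrib, R.join_comm, R.join_comm R.top y]

theorem one_one (x : α) : R.one (R.one x) = R.one x := by
  simp only [one_eq]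
  rw [R.join_assoc, R.join_idem]

theorem one_top : R.one R.top = R.top := by
  rw [one_eq, R.join_idem]

theorem zero_top : R.zero R.top = R.compl R.top := by
  rw [zero, R.meet_comm, R.meet_top]

/-- If `t` and `y` are jointly contradictory, then `t` entails `¬y` relative to the language of `y`. -/
theorem meet_one_eq_of_contra {t y : α}
    (h : R.meet (R.meet t y) (R.compl R.top) = R.meet t y) :
    R.meet t (R.one y) = R.meet t (R.compl y) := by
  rw [one, R.meet_distrib, ← h, R.meet_assoc, ← R.zero_eq, ← R.meet_distrib]
  have := R.join_zero (R.compl y)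
  rw [zero, R.compl_compl, R.meet_comm, R.join_comm] at this
  rw [zero, this]

/-! ### Prime filters -/

/-- Meet-filters. Membership of a meet encodes upward closure for the order `x ≤ y ↔ x ∧ y = x`. -/
structure IsFilt (T : Set α) : Prop where
  top_mem : R.top ∈ T
  meet_mem : ∀ {x y}, x ∈ T → y ∈ T → R.meet x y ∈ T
  left : ∀ {x y}, R.meet x y ∈ T → x ∈ T

/-- Consistent filters deciding every element of their language `{x | 1_x ∈ T}`. -/
structure IsPrime (T : Set α) : Prop extends IsFilt R T where
  cons : R.compl R.top ∉ T
  dec : ∀ {x}, R.one x ∈ T → x ∈ T ∨ R.compl x ∈ T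

variable {R}

theorem IsFilt.right {T : Set α} (hT : IsFilt R T) {x y : α} (h : R.meet x y ∈ T) : y ∈ T :=
  hT.left (R.meet_comm x y ▸ h)

theorem IsFilt.up {T : Set α} (hT : IsFilt R T) {x y : α} (hx : x ∈ T) (h : R.meet x y = x) :
    y ∈ T :=
  hT.right (h.symm ▸ hx)

theorem IsFilt.one_mem {T : Set α} (hT : IsFilt R T) {x : α} (hx : x ∈ T) : R.one x ∈ T :=
  hT.up hx (R.meet_one x)

theorem IsPrime.compl_mem_iff {T : Set α} (hT : IsPrime R T) {x : α} (h1 : R.one x ∈ T) :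
    R.compl x ∈ T ↔ x ∉ T := by
  refine ⟨fun h hx => ?_, fun h => (hT.dec h1).resolve_left h⟩
  have h0 : R.zero x ∈ T := hT.meet_mem hx h
  rw [R.zero_eq] at h0
  exact hT.cons (hT.right h0)

variable (R) in
/-- The filter generated by a filter `T` and an element `y`. -/
def adjoin (T : Set α) (y : α) : Set α :=
  {z | ∃ t ∈ T, R.meet (R.meet t y) z = R.meet t y}

theorem subset_adjoin (T : Set α) (y : α) : T ⊆ adjoin R T y := fun t ht =>
  ⟨t, ht, by rw [R.meet_comm, ← R.meet_assoc, R.meet_idem]⟩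

theorem IsFilt.mem_adjoin {T : Set α} (hT : IsFilt R T) (y : α) : y ∈ adjoin R T y :=
  ⟨R.top, hT.top_mem, by rw [R.meet_assoc, R.meet_idem]⟩

theorem IsFilt.adjoin {T : Set α} (hT : IsFilt R T) (y : α) : IsFilt R (adjoin R T y) where
  top_mem := subset_adjoin T y hT.top_mem
  meet_mem := by
    rintro a b ⟨t, ht, ha⟩ ⟨s, hs, hb⟩
    refine ⟨R.meet t s, hT.meet_mem ht hs, ?_⟩
    have : Std.Associative R.meet := ⟨R.meet_assoc⟩
    have : Std.Commutative R.meet := ⟨R.meet_comm⟩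
    have key : R.meet (R.meet t s) y = R.meet (R.meet t y) (R.meet s y) := by
      conv_lhs => rw [← R.meet_idem y]
      ac_rfl
    rw [key]
    conv_rhs => rw [← ha, ← hb]
    ac_rfl
  left := by
    rintro a b ⟨t, ht, h⟩
    refine ⟨t, ht, ?_⟩
    have : Std.Associative R.meet := ⟨R.meet_assoc⟩
    have : Std.Commutative R.meet := ⟨R.meet_comm⟩
    calc R.meet (R.meet t y) a = R.meet (R.meet (R.meet t y) (R.meet a b)) a := by rw [h]
      _ = R.meet (R.meet t y) (R.meet (R.meet a a) b) := by ac_rfl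
      _ = R.meet t y := by rw [R.meet_idem, h]

theorem IsFilt.compl_mem_of_adjoin {T : Set α} (hT : IsFilt R T) {y : α} (h1 : R.one y ∈ T)
    (h : R.compl R.top ∈ RBA.adjoin R T y) : R.compl y ∈ T := by
  obtain ⟨t, ht, h⟩ := h
  have := hT.meet_mem ht h1
  rw [R.meet_one_eq_of_contra h] at this
  exact hT.right this

/-- Adjoining an element already in the language does not enlarge the language. -/
theorem IsFilt.one_mem_of_adjoin {T : Set α} (hT : IsFilt R T) {y z : α} (h1 : R.one y ∈ T)
    (h : R.one z ∈ RBA.adjoin R T y) : R.one z ∈ T := by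
  obtain ⟨t, ht, h⟩ := h
  have h' := congrArg R.one h
  simp only [R.one_meet, R.one_one] at h'
  exact hT.up (hT.meet_mem (hT.one_mem ht) h1) h'

/-- Every consistent filter extends to a prime filter with the same language. -/
theorem exists_prime {S : Set α} (hS : IsFilt R S) (hc : R.compl R.top ∉ S) :
    ∃ v, IsPrime R v ∧ S ⊆ v ∧ ∀ z, R.one z ∈ v → R.one z ∈ S := by
  obtain ⟨v, hSv, hv⟩ := zorn_subset_nonempty
    {T | IsFilt R T ∧ R.compl R.top ∉ T ∧ ∀ z, R.one z ∈ T → R.one z ∈ S}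
    (by
      intro c hcs hch hne
      refine ⟨⋃₀ c, ⟨⟨?_, ?_, ?_⟩, ?_, ?_⟩, fun s hs => Set.subset_sUnion_of_mem hs⟩
      · obtain ⟨T, hT⟩ := hne
        exact ⟨T, hT, (hcs hT).1.top_mem⟩
      · rintro x y ⟨T, hT, hx⟩ ⟨T', hT', hy⟩
        rcases hch.total hT hT' with h | h
        · exact ⟨T', hT', (hcs hT').1.meet_mem (h hx) hy⟩
        · exact ⟨T, hT, (hcs hT).1.meet_mem hx (h hy)⟩
      · rintro x y ⟨T, hT, h⟩
        exact ⟨T, hT, (hcs hT).1.left h⟩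
      · rintro ⟨T, hT, h⟩
        exact (hcs hT).2.1 h
      · rintro z ⟨T, hT, h⟩
        exact (hcs hT).2.2 z h)
    S ⟨hS, hc, fun _ h => h⟩
  obtain ⟨hF, hcons, hlang⟩ := hv.prop
  refine ⟨v, ⟨hF, hcons, fun {x} h1 => ?_⟩, hSv, hlang⟩
  -- Adjoining `x` keeps the language, so by maximality either `x ∈ v` or consistency is lost.
  by_cases hb : R.compl R.top ∈ RBA.adjoin R v x
  · exact Or.inr (hF.compl_mem_of_adjoin h1 hb)
  · exact Or.inl (hv.le_of_ge
      ⟨hF.adjoin x, hb, fun z hz => hlang z (hF.one_mem_of_adjoin h1 hz)⟩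
      (subset_adjoin v x) (hF.mem_adjoin x))

/-- A consistent filter omitting `x` extends to a prime filter omitting `x`: if `x` is in the
language, adjoin `¬x`; otherwise keep the language unchanged. -/
theorem exists_prime_notMem {S : Set α} (hS : IsFilt R S) (hc : R.compl R.top ∉ S) {x : α}
    (hx : x ∉ S) : ∃ v, IsPrime R v ∧ S ⊆ v ∧ x ∉ v := by
  by_cases h1 : R.one x ∈ S
  · have hc' : R.compl R.top ∉ RBA.adjoin R S (R.compl x) := fun h =>
      hx (R.compl_compl x ▸ hS.compl_mem_of_adjoin (by rwa [R.one_compl]) h)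
    obtain ⟨v, hv, hSv, -⟩ := exists_prime (hS.adjoin _) hc'
    have hSv' := (subset_adjoin S (R.compl x)).trans hSv
    exact ⟨v, hv, hSv', (hv.compl_mem_iff (hSv' h1)).1 (hSv (hS.mem_adjoin _))⟩
  · obtain ⟨v, hv, hSv, hl⟩ := exists_prime hS hc
    exact ⟨v, hv, hSv, fun h => h1 (hl x (hv.one_mem h))⟩

end RBA

/-! ### The canonical model -/

namespace MRBA
variable {α : Type*} {M : MRBA α}

theorem filt_preimage {u : Set α} (hu : M.toRBA.IsPrime u) : M.toRBA.IsFilt (M.fK ⁻¹' u) where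
  top_mem := by
    rw [Set.mem_preimage, M.f2]
    exact hu.top_mem
  meet_mem hx hy := by
    rw [Set.mem_preimage, M.f3]
    exact hu.meet_mem hx hy
  left h := by
    rw [Set.mem_preimage, M.f3] at h
    exact hu.left h

theorem cons_preimage {u : Set α} (hu : M.toRBA.IsPrime u) :
    M.compl M.top ∉ M.fK ⁻¹' u := by
  rw [Set.mem_preimage, ← M.toRBA.zero_top, M.fD, M.toRBA.zero_top]
  exact hu.cons

/-- At a prime filter `u`, the element `f^K x` holds iff `x` holds at every prime filter accessible
from `u`. -/
theorem box_iff {u : Set α} (hu : M.toRBA.IsPrime u) (x : α) :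
    M.fK x ∈ u ↔ ∀ v, M.toRBA.IsPrime v → M.fK ⁻¹' u ⊆ v → x ∈ v := by
  refine ⟨fun h v _ hv => hv h, fun h => ?_⟩
  by_contra hx
  obtain ⟨v, hv, hS, hxv⟩ := RBA.exists_prime_notMem (filt_preimage hu) (cons_preimage hu) hx
  exact hxv (h v hv hS)

variable (M) in
/-- The canonical model of a homomorphism `h`. The order on worlds plays no role in the truth
clauses, so equality is used. -/
def canon {P : Type*} (h : AKForm P → α) : AwModel {u : Set α // M.toRBA.IsPrime u} P where
  ge := Eq
  ge_refl _ := rfl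
  ge_trans _ _ _ := Eq.trans
  Rel u v := M.fK ⁻¹' u.1 ⊆ v.1
  serial u := by
    obtain ⟨v, hv, hS, -⟩ := RBA.exists_prime (filt_preimage u.2) (cons_preimage u.2)
    exact ⟨⟨v, hv⟩, hS⟩
  L p := {u | M.toRBA.one (h (.var p)) ∈ u.1}
  V p := {u | h (.var p) ∈ u.1}
  L_up := by
    rintro p w w' hw rfl
    exact hw
  V_sub _ u hu := u.2.one_mem hu

variable {P : Type*} {h : AKForm P → α}

theorem canon_defined (hh : IsAKHom M h) (φ : AKForm P) (u : {u : Set α // M.toRBA.IsPrime u}) :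
    (canon M h).Defined u φ ↔ M.toRBA.one (h φ) ∈ u.1 := by
  obtain ⟨h1, hn, hc, hk, ha⟩ := hh
  unfold AwModel.Defined
  induction φ with
  | var p => simp [AKForm.vars, canon]
  | one => simpa [AKForm.vars, h1, M.toRBA.one_top] using u.2.top_mem
  | neg φ ih => rw [AKForm.vars, ih, hn, M.toRBA.one_compl]
  | conj φ ψ ih1 ih2 =>
    rw [hc, M.toRBA.one_meet]
    have hm : M.meet (M.toRBA.one (h φ)) (M.toRBA.one (h ψ)) ∈ u.1 ↔
        M.toRBA.one (h φ) ∈ u.1 ∧ M.toRBA.one (h ψ) ∈ u.1 :=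
      ⟨fun h => ⟨u.2.left h, u.2.right h⟩, fun h => u.2.meet_mem h.1 h.2⟩
    rw [hm, ← ih1, ← ih2]
    exact ⟨fun H => ⟨fun p hp => H p (Or.inl hp), fun p hp => H p (Or.inr hp)⟩,
      fun H p hp => hp.elim (H.1 p) (H.2 p)⟩
  | aw φ ih => rw [AKForm.vars, ih, ha, M.f1, M.toRBA.one_one]
  | kn φ ih => rw [AKForm.vars, ih, hk, M.f1]

/-- Truth lemma: a formula in the language of a world is true there iff its value belongs to the
prime filter. -/
theorem canon_sat (hh : IsAKHom M h) (φ : AKForm P) (u : {u : Set α // M.toRBA.IsPrime u})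
    (hd : (canon M h).Defined u φ) : (canon M h).Sat φ u ↔ h φ ∈ u.1 := by
  have hdef := canon_defined hh
  have ⟨h1, hn, hc, hk, ha⟩ := hh
  induction φ generalizing u with
  | var p => exact Iff.rfl
  | one => simpa [AwModel.Sat, h1] using u.2.top_mem
  | neg φ ih =>
    have hd' : (canon M h).Defined u φ := hd
    rw [hn, u.2.compl_mem_iff ((hdef φ u).1 hd')]
    exact not_congr (ih u hd')
  | conj φ ψ ih1 ih2 =>
    rw [hc]
    refine (and_congr (ih1 u fun p hp => hd p (Or.inl hp))
      (ih2 u fun p hp => hd p (Or.inr hp))).trans ?_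
    exact ⟨fun h => u.2.meet_mem h.1 h.2, fun h => ⟨u.2.left h, u.2.right h⟩⟩
  | aw φ _ =>
    rw [AwModel.Sat, ha, box_iff u.2]
    exact ⟨fun H v hv hr => (hdef φ ⟨v, hv⟩).1 (H ⟨v, hv⟩ hr),
      fun H v hr => (hdef φ v).2 (H v.1 v.2 hr)⟩
  | kn φ ih =>
    rw [AwModel.Sat, hk, box_iff u.2]
    refine ⟨fun H v hv hr => ?_, fun H v hr => ?_⟩
    · have := H ⟨v, hv⟩ hr
      exact (ih ⟨v, hv⟩ this.1).1 this.2
    · have hx := H v.1 v.2 hr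
      have hd' := (hdef φ v).2 (v.2.one_mem hx)
      exact ⟨hd', (ih v hd').2 hx⟩

end MRBA

/-! ### The algebra of events -/

/-- The event `(L, V)` with `V ⊆ L`: `L` is where the event is defined, `V` is where it holds. -/
abbrev Event (W : Type*) := {e : Set W × Set W // e.2 ⊆ e.1}

theorem Event.ext' {W : Type*} {x y : Event W} (h1 : ∀ w, w ∈ x.1.1 ↔ w ∈ y.1.1)
    (h2 : ∀ w, w ∈ x.1.2 ↔ w ∈ y.1.2) : x = y :=
  Subtype.ext (Prod.ext (Set.ext h1) (Set.ext h2))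

/-- Events with the connectives defined wherever both arguments are; `0` is the nowhere-defined
event. -/
def eventRBA (W : Type*) : RBA (Event W) where
  meet x y := ⟨(x.1.1 ∩ y.1.1, x.1.2 ∩ y.1.2), Set.inter_subset_inter x.2 y.2⟩
  join x y := ⟨(x.1.1 ∩ y.1.1, (x.1.2 ∪ y.1.2) ∩ (x.1.1 ∩ y.1.1)), Set.inter_subset_right⟩
  compl x := ⟨(x.1.1, x.1.1 \ x.1.2), Set.sdiff_subset⟩
  bot := ⟨(∅, ∅), subset_rfl⟩
  top := ⟨(Set.univ, Set.univ), subset_rfl⟩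
  meet_assoc x y z := by apply Event.ext' <;> intro w <;> simp <;> tauto
  meet_comm x y := by apply Event.ext' <;> intro w <;> simp <;> tauto
  join_assoc x y z := by
    apply Event.ext' <;> intro w <;> have := @z.2 w <;> have := @x.2 w <;> simp <;> tauto
  join_comm x y := by apply Event.ext' <;> intro w <;> simp <;> tauto
  meet_distrib x y z := by
    apply Event.ext' <;> intro w <;> have := @x.2 w <;> simp <;> tauto
  join_distrib x y z := by
    apply Event.ext' <;> intro w <;> have := @y.2 w <;> have := @z.2 w <;> simp <;> tauto
  demorgan_meet x y := by apply Event.ext' <;> intro w <;> simp <;> tauto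
  demorgan_join x y := by apply Event.ext' <;> intro w <;> simp <;> tauto
  meet_idem x := by apply Event.ext' <;> intro w <;> simp
  join_idem x := by apply Event.ext' <;> intro w <;> have := @x.2 w <;> simp <;> tauto
  meet_top x := by apply Event.ext' <;> intro w <;> simp
  compl_compl x := by apply Event.ext' <;> intro w <;> have := @x.2 w <;> simp <;> tauto
  join_top x := by apply Event.ext' <;> intro w <;> simp <;> tauto
  meet_bot x := by apply Event.ext' <;> intro w <;> simp
  rb5 x y _ := by apply Event.ext' <;> intro w <;> simp <;> tauto

theorem eventRBA_one {W : Type*} (x : Event W) :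
    (eventRBA W).one x = ⟨(x.1.1, x.1.1), subset_rfl⟩ := by
  apply Event.ext' <;> intro w <;> simp [RBA.one, eventRBA]; tauto

theorem eventRBA_zero {W : Type*} (x : Event W) :
    (eventRBA W).zero x = ⟨(x.1.1, ∅), Set.empty_subset _⟩ := by
  apply Event.ext' <;> intro w <;> simp [RBA.zero, eventRBA]

/-- Knowledge on events of a model: defined where the event is, true where all accessible worlds
belong to the event. -/
def eventMRBA {W P : Type*} (M : AwModel W P) : MRBA (Event W) where
  toRBA := eventRBA W
  fK x := ⟨(x.1.1, {w | w ∈ x.1.1 ∧ ∀ w', M.Rel w w' → w' ∈ x.1.2}), fun _ h => h.1⟩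
  f1 x := by rw [eventRBA_one, eventRBA_one]
  f2 := by apply Event.ext' <;> intro w <;> simp [eventRBA]
  f3 x y := by
    apply Event.ext' <;> intro w
    · rfl
    · simp only [eventRBA, Set.mem_inter_iff, Set.mem_ofPred_eq]
      exact ⟨fun h => ⟨⟨h.1.1, fun v hv => (h.2 v hv).1⟩, h.1.2, fun v hv => (h.2 v hv).2⟩,
        fun h => ⟨⟨h.1.1, h.2.1⟩, fun v hv => ⟨h.1.2 v hv, h.2.2 v hv⟩⟩⟩
  fD x := by
    rw [eventRBA_zero]
    apply Event.ext' <;> intro w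
    · rfl
    · obtain ⟨v, hv⟩ := M.serial w
      simp only [Set.mem_ofPred_eq, Set.mem_empty_iff_false, iff_false]
      exact fun h => h.2 v hv

/-- The event expressed by a formula. -/
def AwModel.event {W P : Type*} (M : AwModel W P) (φ : AKForm P) : Event W :=
  ⟨(M.Lset φ, M.Vset φ), fun _ h => h.1⟩

theorem AwModel.event_isAKHom {W P : Type*} (M : AwModel W P) :
    IsAKHom (eventMRBA M) M.event := by
  have hconj : ∀ w φ ψ, M.Defined w (.conj φ ψ) ↔ M.Defined w φ ∧ M.Defined w ψ :=
    fun w φ ψ => ⟨fun H => ⟨fun p hp => H p (Or.inl hp), fun p hp => H p (Or.inr hp)⟩,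
      fun H p hp => hp.elim (H.1 p) (H.2 p)⟩
  refine ⟨?_, fun φ => ?_, fun φ ψ => ?_, fun φ => ?_, fun φ => ?_⟩
  · apply Event.ext' <;> intro w <;>
      simp [eventMRBA, eventRBA, event, Lset, Vset, Defined, AKForm.vars, Sat]
  · apply Event.ext' <;> intro w
    · rfl
    · change M.Defined w φ ∧ ¬ M.Sat φ w ↔ M.Defined w φ ∧ ¬ (M.Defined w φ ∧ M.Sat φ w)
      tauto
  · apply Event.ext' <;> intro w
    · exact hconj w φ ψ
    · change M.Defined w (.conj φ ψ) ∧ (M.Sat φ w ∧ M.Sat ψ w) ↔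
        (M.Defined w φ ∧ M.Sat φ w) ∧ (M.Defined w ψ ∧ M.Sat ψ w)
      rw [hconj]
      tauto
  · apply Event.ext' <;> intro w <;> rfl
  · have h1 : (eventMRBA M).toRBA.one (M.event φ) = _ := eventRBA_one _
    rw [h1]
    apply Event.ext' <;> intro w <;> rfl

/-- `φ ∈ ℒ^{A,K}(ℙ)` is valid in the class of modal relativized Boolean algebras iff
it is valid in the class of awareness models. -/
theorem stmt16 {P : Type} (φ : AKForm P) :
    (∀ (α : Type) (M : MRBA α) (h : AKForm P → α),
        IsAKHom M h → h φ = M.toRBA.one (h φ)) ↔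
    (∀ (W : Type) (M : AwModel W P), M.Vset φ = M.Lset φ) := by
  constructor
  · intro H W M
    have h := (H _ _ _ M.event_isAKHom).trans (eventRBA_one _)
    exact congrArg (fun e => e.1.2) h
  · intro H α M h hh
    by_contra hne
    -- The principal filter of `¬ h φ`.
    have htop : M.toRBA.IsFilt {z | M.meet (M.compl (h φ)) z = M.compl (h φ)} := by
      refine ⟨M.meet_top _, fun {x y} hx hy => ?_, fun {x y} hxy => ?_⟩
      · simp only [Set.mem_ofPred_eq] at *
        rw [← M.meet_assoc, hx, hy]
      · simp only [Set.mem_ofPred_eq] at *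
        rw [← hxy, M.meet_assoc, M.meet_comm _ x, ← M.meet_assoc x, M.meet_idem]
    -- `¬ h φ ≤ ¬1` would mean `¬ h φ = 0_{h φ}`, i.e. `h φ = 1_{h φ}`.
    have hcons : M.compl M.top ∉ {z | M.meet (M.compl (h φ)) z = M.compl (h φ)} := by
      intro hz
      rw [Set.mem_ofPred_eq, ← M.toRBA.zero_eq] at hz
      apply hne
      have := congrArg M.compl hz
      rw [RBA.zero, M.demorgan_meet, M.compl_compl] at this
      exact this.symm
    obtain ⟨u, hu, hS, -⟩ := RBA.exists_prime htop hcons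
    have hn : M.compl (h φ) ∈ u := hS (M.meet_idem _)
    have h1 : M.toRBA.one (h φ) ∈ u := M.toRBA.one_compl (h φ) ▸ hu.one_mem hn
    have hd := (MRBA.canon_defined hh φ ⟨u, hu⟩).2 h1
    have hv : (⟨u, hu⟩ : {u : Set α // M.toRBA.IsPrime u}) ∈ (MRBA.canon M h).Vset φ := by
      rw [H]
      exact hd
    exact (hu.compl_mem_iff h1).1 hn ((MRBA.canon_sat hh φ ⟨u, hu⟩ hd).1 hv.2)
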